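/- Let φ ∈ L¹(ℝ) be non-degenerate, i.e. ∫_{−∞}^{0} e^{2πit} φ(t) dt ≠ 0, set h(u) = e^{2πiu} 𝟙_{[0,∞)}(u) and, for m ≤ −2, g_m = h∗φ_m where φ_m(x) = 2^m e^{2πi(1+2^m)x} φ(2^m x). Then for every family {Q_m}_{m ≤ −2} of affine functions Q_m(x) = α_m x + β_m (α_m, β_m ∈ ℂ), one has ∫_{0}^{1/2} ( Σ_{m ≤ −2} |g_m(x) − Q_m(x)|² )^{1/2} dx = ∞. (This is the key step showing that the Rubio de Francia operator without rotations associated with the collection {[1+2^m, 1+2^{m+1}]}_{m ≤ −2} is not bounded on BMO = Ḟ^0_{∞2}.) -/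

import Mathlib

open MeasureTheory Real Set Function
open scoped FourierTransform ENNReal NNReal

/-- `e2pi t = e^{2πit}`. -/
noncomputable def e2pi (t : ℝ) : ℂ := Complex.exp (2 * (Real.pi : ℂ) * Complex.I * (t : ℂ))

/-- Convolution of two functions on `ℝ`. -/
noncomputable def conv (f g : ℝ → ℂ) (x : ℝ) : ℂ := ∫ t, f t * g (x - t)

/-- The modulated Heaviside function `h(u) = e^{2πiu} 𝟙_{[0,∞)}(u)`. -/
noncomputable def heav : ℝ → ℂ := Set.indicator (Set.Ici (0:ℝ)) fun u => e2pi u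

/-- The function `φ_m` associated with the dyadic interval `[1+2^m, 1+2^{m+1}]`:
`φ_m(x) = 2^m e^{2πi(1+2^m)x} φ(2^m x)`. -/
noncomputable def phimDyadic (φ : ℝ → ℂ) (m : ℤ) (x : ℝ) : ℂ :=
  (((2:ℝ) ^ m : ℝ) : ℂ) * e2pi ((1 + (2:ℝ) ^ m) * x) * φ ((2:ℝ) ^ m * x)

open MeasureTheory Real Set Function
theorem e2pi_add (s t : ℝ) : e2pi (s + t) = e2pi s * e2pi t := by
  unfold e2pi
  rw [← Complex.exp_add]; congr 1; push_cast; ring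

theorem continuous_e2pi : Continuous e2pi := by
  unfold e2pi; fun_prop

theorem norm_e2pi (t : ℝ) : ‖e2pi t‖ = 1 := by
  unfold e2pi
  have : 2 * (Real.pi : ℂ) * Complex.I * (t : ℂ) = ((2 * Real.pi * t : ℝ) : ℂ) * Complex.I := by
    push_cast; ring
  rw [this, Complex.norm_exp_ofReal_mul_I]

/-- The primitive of the modulated function. -/
noncomputable def primPhi (φ : ℝ → ℂ) (y : ℝ) : ℂ := ∫ t in Set.Iic y, e2pi t * φ t

theorem integrable_mod (φ : ℝ → ℂ) (hInt : Integrable φ) : Integrable fun t => e2pi t * φ t := by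
  refine hInt.bdd_mul (c := 1) continuous_e2pi.aestronglyMeasurable ?_
  filter_upwards with x
  rw [norm_e2pi]

theorem continuous_primPhi (φ : ℝ → ℂ) (hInt : Integrable φ) : Continuous (primPhi φ) := by
  have hi := integrable_mod φ hInt
  have : primPhi φ = fun y => primPhi φ 0 + ∫ t in (0:ℝ)..y, e2pi t * φ t := by
    funext y
    rw [← intervalIntegral.integral_Iic_sub_Iic hi.integrableOn hi.integrableOn]
    unfold primPhi; ring
  rw [this]
  exact continuous_const.add
    (intervalIntegral.continuous_primitive (fun a b => hi.intervalIntegrable) 0)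

theorem conv_eq (φ : ℝ → ℂ) (m : ℤ) (x : ℝ) :
    conv heav (phimDyadic φ m) x = e2pi x * primPhi φ ((2:ℝ) ^ m * x) := by
  have hs : (0:ℝ) < (2:ℝ) ^ m := by positivity
  unfold conv phimDyadic primPhi
  generalize (2:ℝ) ^ m = s at hs
  rw [← integral_indicator measurableSet_Iic,
    ← integral_sub_left_eq_self _ volume x]
  have h1 : ∀ u : ℝ, heav (x - u) * ((s : ℂ) * e2pi ((1 + s) * (x - (x - u))) *
      φ (s * (x - (x - u)))) = (e2pi x * s) *
        (fun y => (Set.Iic (s * x)).indicator (fun t => e2pi t * φ t) y) (s * u) := by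
    intro u
    rw [sub_sub_cancel]
    unfold heav
    by_cases hu : u ≤ x
    · rw [indicator_of_mem (by simpa using hu)]
      dsimp only
      rw [indicator_of_mem (by simpa using (mul_le_mul_iff_right₀ hs).2 hu)]
      have : (1 + s) * u = u + s * u := by ring
      have h2 : e2pi x = e2pi (x - u) * e2pi u := by rw [← e2pi_add]; congr 1; ring
      rw [this, e2pi_add, h2]; ring
    · rw [indicator_of_notMem (by simpa using hu)]
      dsimp only
      rw [indicator_of_notMem (by simpa using hu.imp (le_of_mul_le_mul_left · hs))]
      simp
  simp_rw [h1]
  rw [integral_const_mul, Measure.integral_comp_mul_left, abs_of_pos (by positivity),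
    Complex.real_smul]
  have : (s : ℂ) ≠ 0 := by exact_mod_cast hs.ne'
  push_cast
  field_simp

theorem int_exp (n : ℂ) (hn : n ≠ 0) :
    ∫ x in (0:ℝ)..(1/2), Complex.exp (2 * Real.pi * Complex.I * n * x) =
      (Complex.exp (Real.pi * Complex.I * n) - 1) / (2 * Real.pi * Complex.I * n) := by
  rw [integral_exp_mul_complex]
  · congr 2
    · congr 1; push_cast; ring
    · simp
  · have : (Real.pi : ℂ) ≠ 0 := by exact_mod_cast Real.pi_ne_zero
    simp [hn, this]

theorem int_main : ∫ x in (0:ℝ)..(1/2), ((Real.cos (4 * Real.pi * x) : ℝ) : ℂ) * e2pi x ≠ 0 := by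
  have h : ∀ x : ℝ, ((Real.cos (4 * Real.pi * x) : ℝ) : ℂ) * e2pi x =
     2⁻¹ * (Complex.exp (2 * Real.pi * Complex.I * 3 * x) +
        Complex.exp (2 * Real.pi * Complex.I * (-1) * x)) := by
    intro x
    unfold e2pi
    rw [Complex.ofReal_cos, Complex.cos, div_mul_eq_mul_div, add_mul, ← Complex.exp_add,
      ← Complex.exp_add, div_eq_inv_mul]
    congr 3 <;> (congr 1; push_cast; ring)
  simp_rw [h]
  rw [intervalIntegral.integral_const_mul, intervalIntegral.integral_add,
    int_exp _ (by norm_num), int_exp _ (by norm_num)]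
  · have e1 : Complex.exp (Real.pi * Complex.I * 3) = -1 := by
      have : (Real.pi * Complex.I * 3 : ℂ) = Real.pi * Complex.I + 2 * Real.pi * Complex.I := by
        ring
      rw [this, Complex.exp_add, Complex.exp_pi_mul_I, Complex.exp_two_pi_mul_I]; simp
    have e2 : Complex.exp (Real.pi * Complex.I * (-1)) = -1 := by
      rw [mul_neg_one, Complex.exp_neg, Complex.exp_pi_mul_I]; norm_num
    rw [e1, e2]
    have : (Real.pi : ℂ) ≠ 0 := by exact_mod_cast Real.pi_ne_zero
    have hI := Complex.I_ne_zero
    field_simp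
    norm_num
  · exact Continuous.intervalIntegrable (by fun_prop) _ _
  · exact Continuous.intervalIntegrable (by fun_prop) _ _

theorem int_cos : ∫ x in (0:ℝ)..(1/2), Real.cos (4 * Real.pi * x) = 0 := by
  have : ∀ x ∈ uIcc (0:ℝ) (1/2), HasDerivAt (fun x => Real.sin (4 * Real.pi * x) / (4 * Real.pi))
      (Real.cos (4 * Real.pi * x)) x := by
    intro x _
    have h1 : HasDerivAt (fun x : ℝ => 4 * Real.pi * x) (4 * Real.pi) x := by
      simpa using (hasDerivAt_id x).const_mul (4 * Real.pi)
    refine ((h1.sin).div_const (4 * Real.pi)).congr_deriv ?_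
    have := Real.pi_ne_zero
    field_simp
  rw [intervalIntegral.integral_eq_sub_of_hasDerivAt this
    (Continuous.intervalIntegrable (by fun_prop) _ _)]
  have : 4 * Real.pi * (1/2) = 2 * Real.pi := by ring
  rw [this]; simp

theorem int_xcos : ∫ x in (0:ℝ)..(1/2), Real.cos (4 * Real.pi * x) * x = 0 := by
  have : ∀ x ∈ uIcc (0:ℝ) (1/2), HasDerivAt (fun x => x * Real.sin (4 * Real.pi * x) / (4 * Real.pi)
        + Real.cos (4 * Real.pi * x) / (4 * Real.pi) ^ 2)
      (Real.cos (4 * Real.pi * x) * x) x := by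
    intro x _
    have h1 : HasDerivAt (fun x : ℝ => 4 * Real.pi * x) (4 * Real.pi) x := by
      simpa using (hasDerivAt_id x).const_mul (4 * Real.pi)
    refine ((((hasDerivAt_id' x).mul h1.sin).div_const (4 * Real.pi)).add
      (h1.cos.div_const ((4 * Real.pi) ^ 2))).congr_deriv ?_
    have := Real.pi_ne_zero
    field_simp
    ring
  rw [intervalIntegral.integral_eq_sub_of_hasDerivAt this
    (Continuous.intervalIntegrable (by fun_prop) _ _)]
  have : 4 * Real.pi * (1/2) = 2 * Real.pi := by ring
  rw [this]; simp

/-- Testing against `cos (4πx)` bounds the `L¹` distance to affine functions. -/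
theorem test_bound (g : ℝ → ℂ) (hg : Continuous g) (a b : ℂ) :
    ENNReal.ofReal ‖∫ x in (0:ℝ)..(1/2), ((Real.cos (4 * Real.pi * x) : ℝ) : ℂ) * g x‖ ≤
      ∫⁻ x in Set.Icc (0:ℝ) (1/2), (‖g x - (a * (x : ℂ) + b)‖₊ : ℝ≥0∞) := by
  have h0 : ∫ x in (0:ℝ)..(1/2), ((Real.cos (4 * Real.pi * x) : ℝ) : ℂ) * g x =
      ∫ x in (0:ℝ)..(1/2), ((Real.cos (4 * Real.pi * x) : ℝ) : ℂ) * (g x - (a * (x : ℂ) + b)) := by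
    have e : ∀ x : ℝ, ((Real.cos (4 * Real.pi * x) : ℝ) : ℂ) * (g x - (a * (x : ℂ) + b)) =
       ((Real.cos (4 * Real.pi * x) : ℝ) : ℂ) * g x -
        (a * ((Real.cos (4 * Real.pi * x) * x : ℝ) : ℂ) +
          b * ((Real.cos (4 * Real.pi * x) : ℝ) : ℂ)) := by
      intro x; push_cast; ring
    simp_rw [e]
    rw [intervalIntegral.integral_sub, intervalIntegral.integral_add,
      intervalIntegral.integral_const_mul, intervalIntegral.integral_const_mul,
      intervalIntegral.integral_ofReal, intervalIntegral.integral_ofReal, int_cos, int_xcos]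
    · simp
    all_goals exact Continuous.intervalIntegrable (by fun_prop) _ _
  rw [h0, intervalIntegral.integral_of_le (by norm_num), ofReal_norm]
  refine (enorm_integral_le_lintegral_enorm _).trans ?_
  refine (lintegral_mono_set Ioc_subset_Icc_self).trans (lintegral_mono fun x => ?_)
  change ‖_‖ₑ ≤ ‖g x - (a * (x : ℂ) + b)‖ₑ
  rw [enorm_le_iff_norm_le, norm_mul, Complex.norm_real]
  exact mul_le_of_le_one_left (norm_nonneg _) (Real.abs_cos_le_one _)

theorem exists_delta (φ : ℝ → ℂ) (hInt : Integrable φ) (hnd : primPhi φ 0 ≠ 0) :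
    ∃ δ : ℝ, 0 < δ ∧ ∃ M : ℕ, ∀ m : ℤ, m ≤ -M →
      δ ≤ ‖∫ x in (0:ℝ)..(1/2), ((Real.cos (4 * Real.pi * x) : ℝ) : ℂ) *
        (e2pi x * primPhi φ ((2:ℝ) ^ m * x))‖ := by
  set F : ℝ → ℝ := fun s => ‖∫ x in (0:ℝ)..(1/2), ((Real.cos (4 * Real.pi * x) : ℝ) : ℂ) *
        (e2pi x * primPhi φ (s * x))‖ with hF
  have hc := continuous_primPhi φ hInt
  have he := continuous_e2pi
  have hFc : Continuous F := by
    refine Continuous.norm ?_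
    apply intervalIntegral.continuous_parametric_intervalIntegral_of_continuous'
    simp only [Function.uncurry_def]
    fun_prop
  have hF0 : 0 < F 0 := by
    simp only [hF, zero_mul, ← mul_assoc]
    rw [intervalIntegral.integral_mul_const]
    exact norm_pos_iff.2 (mul_ne_zero int_main hnd)
  have ht : Filter.Tendsto (fun n : ℕ => ((1/2 : ℝ)) ^ n) Filter.atTop (nhds 0) :=
    tendsto_pow_atTop_nhds_zero_of_lt_one (by norm_num) (by norm_num)
  have := ((hFc.tendsto 0).comp ht).eventually (lt_mem_nhds (half_lt_self hF0))
  obtain ⟨M, hM⟩ := Filter.eventually_atTop.1 this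
  refine ⟨F 0 / 2, by positivity, M, fun m hm => ?_⟩
  have h := hM (-m).toNat (by omega)
  have e : ((1/2 : ℝ)) ^ (-m).toNat = (2:ℝ) ^ m := by
    rw [← zpow_natCast, Int.toNat_of_nonneg (by omega), one_div, inv_zpow', neg_neg]
  rw [Function.comp, e] at h
  exact h.le

theorem statement18 (φ : ℝ → ℂ) (hInt : Integrable φ)
    (hnd : (∫ t in Set.Iic (0:ℝ), e2pi t * φ t) ≠ 0)
    (α β : {m : ℤ // m ≤ -2} → ℂ) :
    ∫⁻ x in Set.Icc (0:ℝ) (1/2),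
        (∑' m : {m : ℤ // m ≤ -2},
          (‖conv heav (phimDyadic φ (m : ℤ)) x - (α m * (x : ℂ) + β m)‖₊ : ℝ≥0∞) ^ 2)
            ^ (1/2 : ℝ)
      = ∞ := by
  obtain ⟨δ, hδ, M, hM⟩ := exists_delta φ hInt hnd
  set I := ∫⁻ x in Set.Icc (0:ℝ) (1/2),
        (∑' m : {m : ℤ // m ≤ -2},
          (‖conv heav (phimDyadic φ (m : ℤ)) x - (α m * (x : ℂ) + β m)‖₊ : ℝ≥0∞) ^ 2)
            ^ (1/2 : ℝ) with hI
  have hc := continuous_primPhi φ hInt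
  have he := continuous_e2pi
  have hg : ∀ m, Continuous (conv heav (phimDyadic φ m)) := by
    intro m
    have : conv heav (phimDyadic φ m) = fun x => e2pi x * primPhi φ ((2:ℝ) ^ m * x) :=
      funext (conv_eq φ m)
    rw [this]; fun_prop
  let a : {m : ℤ // m ≤ -2} → ℝ → ℝ≥0∞ := fun m x =>
    (‖conv heav (phimDyadic φ (m : ℤ)) x - (α m * (x : ℂ) + β m)‖₊ : ℝ≥0∞)
  have ham : ∀ m, Measurable (a m) := by
    intro m
    have : Continuous fun x : ℝ => conv heav (phimDyadic φ (m : ℤ)) x - (α m * (x : ℂ) + β m) := by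
      have := hg m
      fun_prop
    exact this.measurable.enorm
  have hai : ∀ m : {m : ℤ // m ≤ -2}, (m : ℤ) ≤ -M →
      ENNReal.ofReal δ ≤ ∫⁻ x in Set.Icc (0:ℝ) (1/2), a m x := by
    intro m hm
    refine le_trans (ENNReal.ofReal_le_ofReal (hM m hm)) ?_
    simp_rw [← conv_eq]
    exact test_bound _ (hg m) _ _
  let k : ℕ ↪ {m : ℤ // m ≤ -2} := ⟨fun j => ⟨-(M:ℤ) - 2 - j, by omega⟩, by
    intro i j h
    simp only [Subtype.mk.injEq] at h
    omega⟩
  have key : ∀ n : ℕ, 0 < n → (n : ℝ≥0∞) * ENNReal.ofReal δ ≤ I := by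
    intro n hn
    let S : Finset {m : ℤ // m ≤ -2} := (Finset.range (n ^ 2)).map k
    have hS : S.card = n ^ 2 := by simp [S]
    have h1 : ((n ^ 2 : ℕ) : ℝ≥0∞) * ENNReal.ofReal δ ≤
        ∫⁻ x in Set.Icc (0:ℝ) (1/2), ∑ m ∈ S, a m x := by
      rw [lintegral_finsetSum _ (fun m _ => ham m), ← hS, ← nsmul_eq_mul]
      apply Finset.card_nsmul_le_sum
      intro m hm
      obtain ⟨j, _, rfl⟩ := Finset.mem_map.1 hm
      apply hai
      change -(M:ℤ) - 2 - j ≤ -M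
      omega
    have h2 : ∫⁻ x in Set.Icc (0:ℝ) (1/2), ∑ m ∈ S, a m x ≤ n * I := by
      rw [hI, ← lintegral_const_mul' _ _ (ENNReal.natCast_ne_top n)]
      refine lintegral_mono fun x => ?_
      have h3 := ENNReal.rpow_sum_le_const_mul_sum_rpow S (fun m => a m x)
        (p := 2) (by norm_num)
      rw [hS] at h3
      have h4 : (∑ m ∈ S, a m x) ^ (2:ℝ) ≤ (n : ℝ≥0∞) ^ (2:ℝ) * ∑' m, (a m x) ^ 2 := by
        refine h3.trans ?_
        norm_num
        gcongr
        exact ENNReal.sum_le_tsum S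
      have h5 := ENNReal.rpow_le_rpow h4 (z := 1/2) (by norm_num)
      rw [ENNReal.mul_rpow_of_nonneg _ _ (by norm_num), ← ENNReal.rpow_mul,
        ← ENNReal.rpow_mul] at h5
      norm_num at h5
      simpa [a] using h5
    have h6 := h1.trans h2
    rw [pow_two, Nat.cast_mul, mul_assoc] at h6
    exact (ENNReal.mul_le_mul_iff_right (by exact_mod_cast hn.ne') (ENNReal.natCast_ne_top n)).1 h6
  by_contra hne
  have hδ' : ENNReal.ofReal δ ≠ 0 := by simpa using hδ
  obtain ⟨n, hn⟩ := ENNReal.exists_nat_mul_gt hδ' hne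
  rcases Nat.eq_zero_or_pos n with rfl | hp
  · simp at hn
  · exact absurd (key n hp) (not_le.2 hn)
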